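/- Let (X,f) be a TDS and μ ∈ M(X,f). Then E_μ(f) = ess sup{h_μ(x) : x ∈ X}, where h_μ(x) is the Brin–Katok local entropy and the essential supremum is taken with respect to μ. If in addition μ is ergodic, then h_μ(x) = E_μ(f) = h_μ(f) for μ-almost every x ∈ X. -/

import Mathlib

open MeasureTheory Filter Set
open scoped ENNReal NNReal

namespace Paper

variable {X : Type*}

/-- Birkhoff sum `S_n φ(x) = ∑_{i<n} φ(f^i x)`. -/
def birk (f : X → X) (φ : X → ℝ) (n : ℕ) (x : X) : ℝ :=
  ∑ i ∈ Finset.range n, φ (f^[i] x)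

section Metric

variable [MetricSpace X]

/-- The Bowen ball `B_n(x, ε) = {y : d_n(x,y) < ε}`. -/
def bowenBall (f : X → X) (x : X) (n : ℕ) (ε : ℝ) : Set X :=
  {y | ∀ i < n, dist (f^[i] x) (f^[i] y) < ε}

/-- The number of indices `0 ≤ j ≤ n-1` with `dist (f^j x, f^j y) > ε`. -/
noncomputable def sepCount (f : X → X) (ε : ℝ) (n : ℕ) (x y : X) : ℕ :=
  Nat.card {j : ℕ // j < n ∧ ε < dist (f^[j] x) (f^[j] y)}

/-- `A` is an `(n,ε)`-separated set. -/
def IsNSep (f : X → X) (n : ℕ) (ε : ℝ) (A : Set X) : Prop :=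
  ∀ x ∈ A, ∀ y ∈ A, x ≠ y → ∃ j < n, ε < dist (f^[j] x) (f^[j] y)

/-- `A` is a `(δ,n,ε)`-separated set. -/
def IsDeltaSep (f : X → X) (δ : ℝ) (n : ℕ) (ε : ℝ) (A : Set X) : Prop :=
  ∀ x ∈ A, ∀ y ∈ A, x ≠ y → δ * n ≤ (sepCount f ε n x y : ℝ)

end Metric

section Entropy

variable [MeasurableSpace X]

/-- A finite measurable partition of `X`. -/
def IsFinPartition (s : Finset (Set X)) : Prop :=
  (∀ A ∈ s, MeasurableSet A) ∧ ⋃₀ (s : Set (Set X)) = Set.univ ∧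
    (s : Set (Set X)).Pairwise Disjoint

/-- The entropy `H(μ, ⋁_{i<n} f^{-i} ξ)` of the `n`-th dynamical refinement of the
partition `s` (with the convention `0 · log 0 = 0`). -/
noncomputable def dynH (f : X → X) (μ : Measure X) (s : Finset (Set X)) (n : ℕ) : ℝ :=
  -∑ w : Fin n → {A // A ∈ s},
      (μ (⋂ i : Fin n, f^[(i : ℕ)] ⁻¹' ((w i : Set X)))).toReal *
        Real.log (μ (⋂ i : Fin n, f^[(i : ℕ)] ⁻¹' ((w i : Set X)))).toReal

/-- The Kolmogorov–Sinai entropy `h_μ(f)`, as an extended real: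
`sup_ξ lim_n H(μ, ξ^n)/n`. -/
noncomputable def ksEntropy (f : X → X) (μ : Measure X) : EReal :=
  ⨆ (s : Finset (Set X)) (_ : IsFinPartition s),
    Filter.atTop.liminf (fun n : ℕ => ((dynH f μ s n / n : ℝ) : EReal))

end Entropy

section Pressure

variable [MetricSpace X] [MeasurableSpace X]

/-- Brin–Katok local entropy `h_μ(x) = lim_{ε→0} liminf_n -(1/n) log μ(B_n(x,ε))`
(the limit in `ε` being a supremum by monotonicity). -/
noncomputable def localEntropy (f : X → X) (μ : Measure X) (x : X) : EReal :=
  ⨆ (ε : ℝ) (_ : 0 < ε),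
    Filter.atTop.liminf (fun n : ℕ =>
      (((n : ℝ)⁻¹ : ℝ) : EReal) * (-(μ (bowenBall f x n ε)).log))

/-- The point-wise measure theoretic pressure
`P_μ(f,φ,x) = lim_{ε→0} liminf_n (1/n)[-log μ(B_n(x,ε)) + S_nφ(x)]`. -/
noncomputable def ptPressure (f : X → X) (φ : X → ℝ) (μ : Measure X) (x : X) : EReal :=
  ⨆ (ε : ℝ) (_ : 0 < ε),
    Filter.atTop.liminf (fun n : ℕ =>
      (((n : ℝ)⁻¹ : ℝ) : EReal) * (-(μ (bowenBall f x n ε)).log + ((birk f φ n x : ℝ) : EReal)))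

/-- `M(Z,φ,α,N,ε)`: infimum of `∑_i exp(-α n_i + S_{n_i}φ(x_i))` over countable covers
of `Z` by Bowen balls `B_{n_i}(x_i,ε)` with `n_i ≥ N`. -/
noncomputable def Mcov (f : X → X) (φ : X → ℝ) (Z : Set X) (α : ℝ) (N : ℕ) (ε : ℝ) : ℝ≥0∞ :=
  ⨅ (c : ℕ → X × ℕ)
    (_ : (∀ i, N ≤ (c i).2) ∧ Z ⊆ ⋃ i, bowenBall f (c i).1 (c i).2 ε),
      ∑' i, ENNReal.ofReal (Real.exp (-α * ((c i).2 : ℝ) + birk f φ (c i).2 (c i).1))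

/-- `m(Z,φ,α,ε) = lim_{N→∞} M(Z,φ,α,N,ε)` (a supremum, by monotonicity in `N`). -/
noncomputable def mZ (f : X → X) (φ : X → ℝ) (Z : Set X) (α : ℝ) (ε : ℝ) : ℝ≥0∞ :=
  ⨆ N : ℕ, Mcov f φ Z α N ε

/-- `P_Z(f,φ,ε) = inf {α : m(Z,φ,α,ε) = 0}`, the jump-up point of `α ↦ m(Z,φ,α,ε)`. -/
noncomputable def PZeps (f : X → X) (φ : X → ℝ) (Z : Set X) (ε : ℝ) : EReal :=
  ⨅ (α : ℝ) (_ : mZ f φ Z α ε = 0), ((α : ℝ) : EReal)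

/-- The topological pressure `P_Z(f,φ) = lim_{ε→0} P_Z(f,φ,ε)` on an arbitrary set `Z`
(the limit in `ε` being a supremum by monotonicity). -/
noncomputable def PZ (f : X → X) (φ : X → ℝ) (Z : Set X) : EReal :=
  ⨆ (ε : ℝ) (_ : 0 < ε), PZeps f φ Z ε

/-- The measure theoretic pressure
`P_μ(f,φ) = lim_{ε→0} inf {P_Z(f,φ,ε) : Z Borel, μ(Z) = 1}`. -/
noncomputable def Pmu (f : X → X) (φ : X → ℝ) (μ : Measure X) : EReal :=
  ⨆ (ε : ℝ) (_ : 0 < ε),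
    ⨅ (Z : Set X) (_ : MeasurableSet Z ∧ μ Z = 1), PZeps f φ Z ε

end Pressure

end Paper

open Paper

/-!
Pressure equals essential supremum. A Bowen ball of length `n` costs `exp (-α * n)` in a cover. If
the local entropy exceeds `α` on a set of positive measure, then long balls around its points have
measure at most their cost, so no cover can be cheap. If the local entropy is below `α`, then
infinitely often the ball of length `n` has measure more than `exp (-α * n)`; at most `exp (α * n)`
such balls are disjoint, and the doubled balls cover.

Ergodic measures. The local entropy does not increase along orbits, hence it is almost everywhere
constant. When the atoms of a partition are smaller than `ε`, its cylinders lie in Bowen balls of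
radius `ε`, and Fatou's lemma bounds the mean local entropy at scale `ε` by the entropy of the
partition.

Entropy of an invariant measure is at most the essential supremum. If the local entropy is below
`a`, then from almost every point the orbit follows, for some time `m`, one of at most `exp (a * m)`
model orbits, and by Lusin's theorem the model predicts the symbols of the orbit except at rare
times. Encoding an itinerary by concatenating such blocks gives weights on words whose sum over each
length is at most `1` (Kraft's inequality) and whose negative logarithm is bounded by a Birkhoff sum
with mean about `a` per unit time; Gibbs' inequality then bounds the entropy of itineraries.
-/

namespace Paper

open scoped Topology

section BowenBall

variable {X : Type*} [MetricSpace X] {f : X → X} {x y z : X} {n : ℕ} {ε δ : ℝ}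

lemma mem_bowenBall_comm : y ∈ bowenBall f x n ε ↔ x ∈ bowenBall f y n ε := by
  simp only [bowenBall, mem_ofPred_eq, dist_comm]

lemma mem_bowenBall_add (hxy : y ∈ bowenBall f x n ε) (hyz : z ∈ bowenBall f y n δ) :
    z ∈ bowenBall f x n (ε + δ) := fun i hi =>
  (dist_triangle _ (f^[i] y) _).trans_lt (add_lt_add (hxy i hi) (hyz i hi))

lemma bowenBall_mono (f : X → X) (x : X) (n : ℕ) (h : ε ≤ δ) :
    bowenBall f x n ε ⊆ bowenBall f x n δ := fun _ hy i hi => (hy i hi).trans_le h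

lemma bowenBall_succ_subset_preimage (f : X → X) (x : X) (n : ℕ) (ε : ℝ) :
    bowenBall f x (n + 1) ε ⊆ f ⁻¹' bowenBall f (f x) n ε := fun _ hy i hi => by
  simpa only [← Function.iterate_succ_apply] using hy (i + 1) (by omega)

lemma isOpen_setOf_mem_bowenBall (hf : Continuous f) (n : ℕ) (ε : ℝ) :
    IsOpen {p : X × X | p.2 ∈ bowenBall f p.1 n ε} := by
  have hset : {p : X × X | p.2 ∈ bowenBall f p.1 n ε} =
      ⋂ i ∈ Iio n, {p : X × X | dist (f^[i] p.1) (f^[i] p.2) < ε} := by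
    ext p; simp [bowenBall]
  rw [hset]
  exact (finite_Iio n).isOpen_biInter fun i _ =>
    isOpen_lt (((hf.iterate i).comp continuous_fst).dist ((hf.iterate i).comp continuous_snd))
      continuous_const

lemma isOpen_bowenBall (hf : Continuous f) (x : X) (n : ℕ) (ε : ℝ) :
    IsOpen (bowenBall f x n ε) :=
  (isOpen_setOf_mem_bowenBall hf n ε).preimage (Continuous.prodMk_right x)

end BowenBall

section Semicontinuity

lemma lowerSemicontinuous_measure_prodMk_preimage {X Y : Type*} [TopologicalSpace X]
    [FirstCountableTopology X] [TopologicalSpace Y] [MeasurableSpace Y] [OpensMeasurableSpace Y]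
    (μ : Measure Y) {U : Set (X × Y)} (hU : IsOpen U) :
    LowerSemicontinuous fun x => μ (Prod.mk x ⁻¹' U) := by
  have hsection (x : X) : MeasurableSet (Prod.mk x ⁻¹' U) :=
    (hU.preimage (Continuous.prodMk_right x)).measurableSet
  refine lowerSemicontinuous_iff_le_liminf.2 fun x => ?_
  simp only [← lintegral_indicator_one (hsection _)]
  refine le_trans (lintegral_mono fun y => ?_)
    (lintegral_liminf_le fun x' => measurable_one.indicator (hsection x'))
  refine le_liminf_of_le (h := ?_)
  by_cases hy : (x, y) ∈ U
  · filter_upwards [(hU.preimage (Continuous.prodMk_left y)).mem_nhds hy] with x' hx'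
    rw [indicator_of_mem (show y ∈ Prod.mk x ⁻¹' U from hy),
      indicator_of_mem (show y ∈ Prod.mk x' ⁻¹' U from hx')]
  · exact Eventually.of_forall fun x' => by
      rw [indicator_of_notMem (show y ∉ Prod.mk x ⁻¹' U from hy)]; exact zero_le

variable {X : Type*} [MetricSpace X] [MeasurableSpace X] [OpensMeasurableSpace X] {f : X → X}

lemma measurable_measure_bowenBall (hf : Continuous f) (μ : Measure X) (n : ℕ) (ε : ℝ) :
    Measurable fun x => μ (bowenBall f x n ε) :=
  (lowerSemicontinuous_measure_prodMk_preimage μ (isOpen_setOf_mem_bowenBall hf n ε)).measurable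

end Semicontinuity

section ExpRate

/-- The exponential rate `-(1/n) log m` at which a quantity `m` decays at time `n`, so that
`m = exp (-n * expRate n m)`. For `n = 0` it is the junk value `0`. -/
noncomputable def expRate (n : ℕ) (m : ℝ≥0∞) : EReal := ((n : ℝ)⁻¹ : ℝ) * (-m.log)

variable {n : ℕ} {a b : ℝ} {m : ℝ≥0∞}

lemma antitone_expRate (n : ℕ) : Antitone (expRate n) := fun _ _ h =>
  mul_le_mul_of_nonneg_left (EReal.neg_le_neg_iff.2 (ENNReal.log_monotone h))
    (by exact_mod_cast inv_nonneg.2 n.cast_nonneg)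

lemma measurable_expRate (n : ℕ) : Measurable (expRate n) := (antitone_expRate n).measurable

lemma expRate_nonneg (n : ℕ) (hm : m ≤ 1) : 0 ≤ expRate n m := by
  simpa [expRate] using antitone_expRate n hm

lemma expRate_ofReal_exp_pow (hn : n ≠ 0) (a : ℝ) :
    expRate n (ENNReal.ofReal (Real.exp (-a)) ^ n) = a := by
  rw [expRate, ← ENNReal.ofReal_pow (Real.exp_pos _).le, ← Real.exp_nat_mul,
    ENNReal.log_ofReal_of_pos (Real.exp_pos _), Real.log_exp, ← EReal.coe_neg, ← EReal.coe_mul]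
  congr 1
  field_simp

lemma le_expRate (hn : n ≠ 0) (h : m ≤ ENNReal.ofReal (Real.exp (-a)) ^ n) : a ≤ expRate n m :=
  (expRate_ofReal_exp_pow hn a).ge.trans (antitone_expRate n h)

lemma le_of_lt_expRate (hn : n ≠ 0) (h : a < expRate n m) :
    m ≤ ENNReal.ofReal (Real.exp (-a)) ^ n := by
  contrapose! h
  exact (antitone_expRate n h.le).trans (expRate_ofReal_exp_pow hn a).le

lemma le_of_expRate_lt (hn : n ≠ 0) (h : expRate n m < a) :
    ENNReal.ofReal (Real.exp (-a)) ^ n ≤ m := by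
  contrapose! h
  exact le_expRate hn h.le

lemma ofReal_exp_neg_lt_one (ha : 0 < a) : ENNReal.ofReal (Real.exp (-a)) < 1 := by
  simpa using ha

lemma mul_ofReal_exp_pow_le (h : m * ENNReal.ofReal (Real.exp (-a)) ^ n ≤ 1) (b : ℝ) :
    m * ENNReal.ofReal (Real.exp (-b)) ^ n ≤ ENNReal.ofReal (Real.exp (-(b - a))) ^ n := by
  have hsplit : Real.exp (-b) = Real.exp (-a) * Real.exp (-(b - a)) := by
    rw [← Real.exp_add]; ring_nf
  rw [hsplit, ENNReal.ofReal_mul (Real.exp_pos _).le, mul_pow, ← mul_assoc]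
  exact mul_le_of_le_one_left' h

end ExpRate

section EssSup

variable {α β : Type*} {mα : MeasurableSpace α} {μ : Measure α} [CompleteLinearOrder β]
  [TopologicalSpace β] [FirstCountableTopology β] [OrderTopology β]

lemma essSup_iSup {ι : Type*} [Countable ι] (g : ι → α → β) :
    essSup (fun x => ⨆ i, g i x) μ = ⨆ i, essSup (g i) μ := by
  refine le_antisymm (essSup_le_of_ae_le _ ?_) (iSup_le fun i => ?_)
  · filter_upwards [ae_all_iff.2 fun i => ae_le_essSup (f := g i) (μ := μ)] with x hx
    exact iSup_mono hx
  · exact essSup_mono_ae (Eventually.of_forall fun x => le_iSup (fun i => g i x) i)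

lemma ae_eq_essSup_of_comp_le [DenselyOrdered β] [MeasurableSpace β] [OpensMeasurableSpace β]
    [IsFiniteMeasure μ] {f : α → α} (hf : Ergodic f μ) {g : α → β} (hg : Measurable g)
    (hgf : ∀ x, g (f x) ≤ g x) : ∀ᵐ x ∂μ, g x = essSup g μ := by
  have hdichotomy (c : β) : (∀ᵐ x ∂μ, c ≤ g x) ∨ ∀ᵐ x ∂μ, g x < c := by
    have hmono : {x | g x < c} ≤ᵐ[μ] f ⁻¹' {x | g x < c} :=
      Eventually.of_forall fun x hx => (hgf x).trans_lt hx
    refine (hf.ae_empty_or_univ_of_ae_le_preimage (hg measurableSet_Iio).nullMeasurableSet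
      hmono).imp (fun h => ?_) fun h => ?_
    · exact (measure_eq_zero_iff_ae_notMem.1 (ae_eq_empty.1 h)).mono fun x => not_lt.1
    · exact mem_ae_iff.2 (ae_eq_univ.1 h)
  have hle : essSup g μ ≤ essInf g μ := le_of_forall_lt_imp_le_of_dense fun c hc =>
    (hdichotomy c).elim (le_essInf_of_ae_le c) fun h =>
      absurd (essSup_le_of_ae_le c (h.mono fun _ => le_of_lt)) hc.not_ge
  filter_upwards [ae_le_essSup (f := g) (μ := μ), ae_essInf_le (f := g) (μ := μ)] with x hx hx'
  exact hx.antisymm (hle.trans hx')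

end EssSup

section LocalEntropyAt

lemma iSup_pos_eq_iSup_nat {β : Type*} [CompleteLattice β] {φ : ℝ → β} (hφ : Antitone φ) :
    ⨆ (ε : ℝ) (_ : 0 < ε), φ ε = ⨆ k : ℕ, φ (1 / (k + 1)) := by
  refine le_antisymm (iSup₂_le fun ε hε => ?_) (iSup_le fun k => ?_)
  · obtain ⟨k, hk⟩ := exists_nat_one_div_lt hε
    exact le_iSup_of_le k (hφ hk.le)
  · exact le_iSup₂_of_le (1 / (k + 1) : ℝ) (by positivity) le_rfl

variable {X : Type*} [MetricSpace X] [MeasurableSpace X]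

/-- The local entropy of `μ` at `x` seen at scale `ε`: the lower exponential decay rate of the
measures of the Bowen balls `B_n(x, ε)`. The local entropy is its supremum over `ε > 0`. -/
noncomputable def localEntropyAt (f : X → X) (μ : Measure X) (ε : ℝ) (x : X) : EReal :=
  liminf (fun n => expRate n (μ (bowenBall f x n ε))) atTop

variable {f : X → X} {μ : Measure X} {ε a : ℝ} {x : X}

lemma antitone_localEntropyAt (f : X → X) (μ : Measure X) : Antitone (localEntropyAt f μ) :=
  fun _ _ h x => liminf_le_liminf (Eventually.of_forall fun n =>
    antitone_expRate n (measure_mono (bowenBall_mono f x n h)))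

lemma localEntropyAt_nonneg [IsProbabilityMeasure μ] (f : X → X) (ε : ℝ) (x : X) :
    0 ≤ localEntropyAt f μ ε x :=
  le_liminf_of_le (h := Eventually.of_forall fun n => expRate_nonneg n prob_le_one)

lemma localEntropyAt_le_localEntropy (f : X → X) (μ : Measure X) (hε : 0 < ε) (x : X) :
    localEntropyAt f μ ε x ≤ localEntropy f μ x :=
  le_iSup₂ (f := fun ε (_ : 0 < ε) => localEntropyAt f μ ε x) ε hε

lemma localEntropy_nonneg [IsProbabilityMeasure μ] (f : X → X) (x : X) : 0 ≤ localEntropy f μ x :=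
  (localEntropyAt_nonneg f 1 x).trans (localEntropyAt_le_localEntropy f μ one_pos x)

lemma localEntropy_eq_iSup_nat (f : X → X) (μ : Measure X) :
    localEntropy f μ = fun x => ⨆ k : ℕ, localEntropyAt f μ (1 / (k + 1)) x :=
  funext fun x => iSup_pos_eq_iSup_nat fun _ _ h => antitone_localEntropyAt f μ h x

lemma essSup_localEntropy_eq_iSup (f : X → X) (μ : Measure X) :
    essSup (localEntropy f μ) μ = ⨆ (ε : ℝ) (_ : 0 < ε), essSup (localEntropyAt f μ ε) μ := by
  rw [localEntropy_eq_iSup_nat, essSup_iSup,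
    iSup_pos_eq_iSup_nat fun _ _ h =>
      essSup_mono_ae (Eventually.of_forall (antitone_localEntropyAt f μ h))]

lemma eventually_le_of_lt_localEntropyAt (h : a < localEntropyAt f μ ε x) :
    ∀ᶠ n in atTop, μ (bowenBall f x n ε) ≤ ENNReal.ofReal (Real.exp (-a)) ^ n := by
  filter_upwards [eventually_lt_of_lt_liminf h, eventually_ne_atTop 0] with n hlt hn
  exact le_of_lt_expRate hn hlt

lemma frequently_le_of_localEntropyAt_lt (h : localEntropyAt f μ ε x < a) :
    ∃ᶠ n in atTop, ENNReal.ofReal (Real.exp (-a)) ^ n ≤ μ (bowenBall f x n ε) :=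
  ((frequently_lt_of_liminf_lt (h := h)).and_eventually (eventually_ne_atTop 0)).mono
    fun _ h => le_of_expRate_lt h.2 h.1

lemma le_localEntropyAt_of_eventually
    (h : ∀ᶠ n in atTop, μ (bowenBall f x n ε) ≤ ENNReal.ofReal (Real.exp (-a)) ^ n) :
    a ≤ localEntropyAt f μ ε x := by
  refine le_liminf_of_le (h := ?_)
  filter_upwards [h, eventually_ne_atTop 0] with n hle hn
  exact le_expRate hn hle

variable [OpensMeasurableSpace X]

lemma measurable_localEntropyAt (hf : Continuous f) (μ : Measure X) (ε : ℝ) :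
    Measurable (localEntropyAt f μ ε) :=
  Measurable.liminf fun n => (measurable_expRate n).comp (measurable_measure_bowenBall hf μ n ε)

lemma measurable_localEntropy (hf : Continuous f) (μ : Measure X) :
    Measurable (localEntropy f μ) := by
  rw [localEntropy_eq_iSup_nat]
  exact Measurable.iSup fun k => measurable_localEntropyAt hf μ _

lemma eventually_ofReal_exp_pow_le_pow_succ {a b : ℝ} (hab : a < b) :
    ∀ᶠ n : ℕ in atTop, ENNReal.ofReal (Real.exp (-b)) ^ n ≤
      ENNReal.ofReal (Real.exp (-a)) ^ (n + 1) := by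
  filter_upwards [tendsto_natCast_atTop_atTop.eventually_ge_atTop (a / (b - a))] with n hn
  rw [← ENNReal.ofReal_pow (Real.exp_pos _).le, ← ENNReal.ofReal_pow (Real.exp_pos _).le,
    ← Real.exp_nat_mul, ← Real.exp_nat_mul]
  rw [div_le_iff₀ (sub_pos.2 hab)] at hn
  refine ENNReal.ofReal_le_ofReal (Real.exp_le_exp.2 ?_)
  push_cast
  linarith

lemma localEntropyAt_map_le (hf : Continuous f) (hinv : MeasurePreserving f μ μ) (ε : ℝ) (x : X) :
    localEntropyAt f μ ε (f x) ≤ localEntropyAt f μ ε x := by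
  refine EReal.ge_of_forall_gt_iff_ge.1 fun a ha => ?_
  obtain ⟨b, hab, hb⟩ := EReal.lt_iff_exists_real_btwn.1 ha
  have hshift : ∀ᶠ n in map (· + 1) atTop,
      μ (bowenBall f x n ε) ≤ ENNReal.ofReal (Real.exp (-a)) ^ n := by
    refine eventually_map.2 ?_
    filter_upwards [eventually_le_of_lt_localEntropyAt hb,
      eventually_ofReal_exp_pow_le_pow_succ (EReal.coe_lt_coe_iff.1 hab)] with n hball hpow
    calc μ (bowenBall f x (n + 1) ε) ≤ μ (f ⁻¹' bowenBall f (f x) n ε) :=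
          measure_mono (bowenBall_succ_subset_preimage f x n ε)
      _ = μ (bowenBall f (f x) n ε) :=
          hinv.measure_preimage (isOpen_bowenBall hf _ _ _).nullMeasurableSet
      _ ≤ _ := hball.trans hpow
  rw [map_add_atTop_eq_nat] at hshift
  exact le_localEntropyAt_of_eventually hshift

lemma localEntropy_map_le (hf : Continuous f) (hinv : MeasurePreserving f μ μ) (x : X) :
    localEntropy f μ (f x) ≤ localEntropy f μ x :=
  iSup₂_mono fun ε _ => localEntropyAt_map_le hf hinv ε x

end LocalEntropyAt

section Packing

lemma exists_finset_card_mul_le_and_inter_nonempty {α ι : Type*} {mα : MeasurableSpace α}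
    (μ : Measure α) [IsFiniteMeasure μ] {V : ι → Set α} (hV : ∀ i, MeasurableSet (V i))
    {c : ℝ≥0∞} (hc : c ≠ 0) :
    ∃ E : Finset ι, E.card * c ≤ μ univ ∧ ∀ i, c ≤ μ (V i) → ∃ j ∈ E, (V i ∩ V j).Nonempty := by
  obtain ⟨u, hu, hdisj, hcover⟩ := Vitali.exists_disjoint_subfamily_covering_enlargement V
    {i | c ≤ μ (V i)} 0 2 one_lt_two (fun _ _ => le_rfl) 0 (fun _ _ => le_rfl)
    fun i hi => nonempty_of_measure_ne_zero fun h => hc (nonpos_iff_eq_zero.1 (h ▸ hi))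
  have hfin : u.Finite := by
    have := Measure.finite_const_le_meas_of_disjoint_iUnion μ (pos_iff_ne_zero.2 hc)
      (As := fun i : u => V i) (fun i => hV i)
      (hdisj.on_injective Subtype.val_injective Subtype.prop) (measure_ne_top _ _)
    rw [show {i : u | c ≤ μ (V i)} = univ from eq_univ_of_forall fun i => hu i.2] at this
    exact finite_coe_iff.1 (finite_univ_iff.1 this)
  refine ⟨hfin.toFinset, ?_, fun i hi => ?_⟩
  · calc hfin.toFinset.card * c = ∑ _i ∈ hfin.toFinset, c := by simp
      _ ≤ ∑ i ∈ hfin.toFinset, μ (V i) :=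
          Finset.sum_le_sum fun i hi => hu (hfin.mem_toFinset.1 hi)
      _ = μ (⋃ i ∈ hfin.toFinset, V i) :=
          (measure_biUnion_finset (by simpa using hdisj) fun i _ => hV i).symm
      _ ≤ μ univ := measure_mono (subset_univ _)
  · obtain ⟨j, hj, hij, -⟩ := hcover i hi
    exact ⟨j, hfin.mem_toFinset.2 hj, hij⟩

variable {X : Type*} [MetricSpace X] [MeasurableSpace X] [OpensMeasurableSpace X] {f : X → X}

lemma exists_finset_card_le_and_frequently_mem_bowenBall (hf : Continuous f) (μ : Measure X)
    [IsProbabilityMeasure μ] (ε a : ℝ) :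
    ∃ E : ℕ → Finset X, (∀ n, (E n).card * ENNReal.ofReal (Real.exp (-a)) ^ n ≤ 1) ∧
      ∀ x, localEntropyAt f μ ε x < a → ∃ᶠ n in atTop, ∃ y ∈ E n, x ∈ bowenBall f y n (2 * ε) := by
  choose E hcard hE using fun n => exists_finset_card_mul_le_and_inter_nonempty μ
    (V := fun x => bowenBall f x n ε) (fun x => (isOpen_bowenBall hf x n ε).measurableSet)
    (c := ENNReal.ofReal (Real.exp (-a)) ^ n) (by positivity)
  refine ⟨E, fun n => measure_univ (μ := μ) ▸ hcard n, fun x hx => ?_⟩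
  refine (frequently_le_of_localEntropyAt_lt hx).mono fun n hn => ?_
  obtain ⟨y, hy, z, hxz, hyz⟩ := hE n x hn
  exact ⟨y, hy, two_mul ε ▸ mem_bowenBall_add hyz (mem_bowenBall_comm.1 hxz)⟩

end Packing

section Pressure

variable {X : Type*} [MetricSpace X] {f : X → X}

lemma Mcov_zero (f : X → X) (Z : Set X) (a : ℝ) (N : ℕ) (ε : ℝ) :
    Mcov f (fun _ => 0) Z a N ε = ⨅ (c : ℕ → X × ℕ)
      (_ : (∀ i, N ≤ (c i).2) ∧ Z ⊆ ⋃ i, bowenBall f (c i).1 (c i).2 ε),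
      ∑' i, ENNReal.ofReal (Real.exp (-a)) ^ (c i).2 := by
  refine iInf_congr fun c => iInf_congr fun _ => tsum_congr fun i => ?_
  rw [← ENNReal.ofReal_pow (Real.exp_pos _).le, ← Real.exp_nat_mul]
  simp [birk, mul_comm]

-- `Mcov` only allows sequences of balls; a cover indexed by `ι` is padded by balls so long that
-- their total cost is arbitrarily small.
lemma Mcov_zero_le_tsum [Nonempty X] {ι : Type*} [Countable ι] {Z : Set X} {a ε : ℝ} {N : ℕ}
    (ha : 0 < a) (c : ι → X × ℕ) (hN : ∀ i, N ≤ (c i).2)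
    (hZ : Z ⊆ ⋃ i, bowenBall f (c i).1 (c i).2 ε) :
    Mcov f (fun _ => 0) Z a N ε ≤ ∑' i, ENNReal.ofReal (Real.exp (-a)) ^ (c i).2 := by
  obtain ⟨x₀⟩ := ‹Nonempty X›
  set r := ENNReal.ofReal (Real.exp (-a))
  have hr : r < 1 := ofReal_exp_neg_lt_one ha
  have hpad (K : ℕ) (hK : N ≤ K) :
      Mcov f (fun _ => 0) Z a N ε ≤ ∑' i, r ^ (c i).2 + r ^ K * (1 - r)⁻¹ := by
    obtain ⟨e⟩ : Nonempty (ℕ ≃ ι ⊕ ℕ) := nonempty_equiv_of_countable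
    let d : ι ⊕ ℕ → X × ℕ := Sum.elim c fun j => (x₀, K + j)
    have hd (s : ι ⊕ ℕ) : N ≤ (d s).2 := by
      rcases s with i | j
      exacts [hN i, le_add_right hK]
    have hZd : Z ⊆ ⋃ k, bowenBall f (d (e k)).1 (d (e k)).2 ε := by
      rw [e.surjective.iUnion_comp fun s => bowenBall f (d s).1 (d s).2 ε]
      exact hZ.trans (iUnion_subset fun i =>
        subset_iUnion (fun s => bowenBall f (d s).1 (d s).2 ε) (Sum.inl i))
    rw [Mcov_zero]
    refine (iInf₂_le (d ∘ e) ⟨fun k => hd (e k), hZd⟩).trans_eq ?_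
    rw [show ∑' k, r ^ ((d ∘ e) k).2 = ∑' s, r ^ (d s).2 from e.tsum_eq fun s => r ^ (d s).2,
      ENNReal.summable.tsum_sum ENNReal.summable, ← ENNReal.tsum_geometric, ← ENNReal.tsum_mul_left]
    simp only [d, Sum.elim_inl, Sum.elim_inr, pow_add]
  have hlim : Tendsto (fun K => ∑' i, r ^ (c i).2 + r ^ K * (1 - r)⁻¹) atTop
      (𝓝 (∑' i, r ^ (c i).2 + 0 * (1 - r)⁻¹)) :=
    (ENNReal.Tendsto.mul_const (ENNReal.tendsto_pow_atTop_nhds_zero_of_lt_one hr)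
      (.inr (by simpa [tsub_eq_zero_iff_le] using hr))).const_add _
  rw [zero_mul, add_zero] at hlim
  exact ge_of_tendsto hlim (eventually_atTop.2 ⟨N, hpad⟩)

variable [MeasurableSpace X] {μ : Measure X}

lemma mZ_zero_eq_zero [OpensMeasurableSpace X] (hf : Continuous f) [IsProbabilityMeasure μ]
    {Z : Set X} (hZne : Z.Nonempty) {a b ε : ℝ} (hab : a < b)
    (hZ : ∀ x ∈ Z, localEntropyAt f μ ε x < a) : mZ f (fun _ => 0) Z b (2 * ε) = 0 := by
  have : Nonempty X := nonempty_of_isProbabilityMeasure μ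
  have ha : 0 < a := by
    obtain ⟨x, hx⟩ := hZne
    exact EReal.coe_pos.1 ((localEntropyAt_nonneg f ε x).trans_lt (hZ x hx))
  obtain ⟨E, hcard, hE⟩ := exists_finset_card_le_and_frequently_mem_bowenBall hf μ ε a
  set r := ENNReal.ofReal (Real.exp (-b))
  set s := ENNReal.ofReal (Real.exp (-(b - a)))
  have hs : s < 1 := ofReal_exp_neg_lt_one (sub_pos.2 hab)
  have htail (N M : ℕ) (hM : N ≤ M) :
      Mcov f (fun _ => 0) Z b N (2 * ε) ≤ ∑' k, s ^ (k + M) := by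
    calc Mcov f (fun _ => 0) Z b N (2 * ε)
        ≤ ∑' i : (Σ k, E (k + M)), r ^ (i.1 + M) := by
          refine Mcov_zero_le_tsum (ha.trans hab) (fun i : (Σ k, E (k + M)) => (i.2, i.1 + M))
            (fun i => le_add_left hM) fun x hx => ?_
          obtain ⟨n, hn, y, hy, hxy⟩ := frequently_atTop.1 (hE x (hZ x hx)) M
          obtain ⟨k, rfl⟩ := Nat.exists_eq_add_of_le' hn
          exact mem_iUnion.2 ⟨⟨k, y, hy⟩, hxy⟩
      _ = ∑' k, (E (k + M)).card * r ^ (k + M) := by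
          rw [ENNReal.tsum_sigma fun k (_ : E (k + M)) => r ^ (k + M)]
          simp
      _ ≤ ∑' k, s ^ (k + M) :=
          ENNReal.tsum_le_tsum fun k => mul_ofReal_exp_pow_le (hcard _) b
  have hsummable : ∑' n, s ^ n ≠ ∞ := by
    simpa [ENNReal.tsum_geometric, tsub_eq_zero_iff_le] using hs
  refine ENNReal.iSup_eq_zero.2 fun N => nonpos_iff_eq_zero.1 ?_
  exact ge_of_tendsto (ENNReal.tendsto_sum_nat_add _ hsummable) (eventually_atTop.2 ⟨N, htail N⟩)

lemma measure_inter_le_Mcov_zero {D : Set X} {a ε : ℝ} {N : ℕ}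
    (hD : ∀ x ∈ D, ∀ n ≥ N, μ (bowenBall f x n (2 * ε)) ≤ ENNReal.ofReal (Real.exp (-a)) ^ n)
    (Z : Set X) : μ (Z ∩ D) ≤ Mcov f (fun _ => 0) Z a N ε := by
  rw [Mcov_zero]
  refine le_iInf₂ fun c ⟨hN, hZ⟩ => ?_
  calc μ (Z ∩ D) ≤ μ (⋃ i, bowenBall f (c i).1 (c i).2 ε ∩ D) := by
        rw [← iUnion_inter]
        exact measure_mono (inter_subset_inter_left D hZ)
    _ ≤ ∑' i, μ (bowenBall f (c i).1 (c i).2 ε ∩ D) := measure_iUnion_le _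
    _ ≤ ∑' i, ENNReal.ofReal (Real.exp (-a)) ^ (c i).2 := ENNReal.tsum_le_tsum fun i => ?_
  rcases (bowenBall f (c i).1 (c i).2 ε ∩ D).eq_empty_or_nonempty with hempty | ⟨y, hy, hyD⟩
  · simp [hempty]
  · refine (measure_mono fun z hz => ?_).trans (hD y hyD _ (hN i))
    exact two_mul ε ▸ mem_bowenBall_add (mem_bowenBall_comm.1 hy) hz.1

lemma measure_inter_setOf_lt_localEntropyAt {Z : Set X} {b ε : ℝ}
    (h : mZ f (fun _ => 0) Z b ε = 0) : μ (Z ∩ {x | b < localEntropyAt f μ (2 * ε) x}) = 0 := by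
  let D (N : ℕ) : Set X :=
    {x | ∀ n ≥ N, μ (bowenBall f x n (2 * ε)) ≤ ENNReal.ofReal (Real.exp (-b)) ^ n}
  have hD (N : ℕ) : μ (Z ∩ D N) = 0 := nonpos_iff_eq_zero.1 <|
    (measure_inter_le_Mcov_zero (fun _ hx => hx) Z).trans_eq (ENNReal.iSup_eq_zero.1 h N)
  refine measure_mono_null ?_ (measure_iUnion_null hD)
  rw [← inter_iUnion]
  exact inter_subset_inter_right Z fun x hx =>
    mem_iUnion.2 (eventually_atTop.1 (eventually_le_of_lt_localEntropyAt hx))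

variable [IsProbabilityMeasure μ]

lemma essSup_localEntropyAt_le_iInf_PZeps (ε : ℝ) :
    essSup (localEntropyAt f μ (2 * ε)) μ ≤
      ⨅ (Z : Set X) (_ : MeasurableSet Z ∧ μ Z = 1), PZeps f (fun _ => 0) Z ε := by
  refine le_iInf₂ fun Z ⟨hZm, hZ⟩ => le_iInf₂ fun b hb => essSup_le_of_ae_le _ ?_
  filter_upwards [(mem_ae_iff_prob_eq_one hZm).2 hZ,
    measure_eq_zero_iff_ae_notMem.1 (measure_inter_setOf_lt_localEntropyAt hb)] with x hxZ hx
  exact not_lt.1 fun h => hx ⟨hxZ, h⟩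

lemma iInf_PZeps_le_essSup_localEntropyAt [OpensMeasurableSpace X] (hf : Continuous f) (ε : ℝ) :
    ⨅ (Z : Set X) (_ : MeasurableSet Z ∧ μ Z = 1), PZeps f (fun _ => 0) Z (2 * ε) ≤
      essSup (localEntropyAt f μ ε) μ := by
  refine EReal.le_of_forall_lt_iff_le.1 fun b hb => ?_
  obtain ⟨a, ha, hab⟩ := EReal.lt_iff_exists_real_btwn.1 hb
  have hae : ∀ᵐ x ∂μ, localEntropyAt f μ ε x < a := ae_lt_of_essSup_lt ha
  have hmeas : MeasurableSet {x | localEntropyAt f μ ε x < a} :=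
    measurable_localEntropyAt hf μ ε measurableSet_Iio
  exact iInf₂_le_of_le _ ⟨hmeas, (mem_ae_iff_prob_eq_one hmeas).1 hae⟩ <|
    iInf₂_le b (mZ_zero_eq_zero hf hae.exists (EReal.coe_lt_coe_iff.1 hab) fun _ hx => hx)

theorem Pmu_zero_eq_essSup_localEntropy [OpensMeasurableSpace X] (hf : Continuous f) :
    Pmu f (fun _ => 0) μ = essSup (localEntropy f μ) μ := by
  rw [essSup_localEntropy_eq_iSup]
  refine le_antisymm (iSup₂_le fun ε hε => ?_) (iSup₂_le fun ε hε => ?_)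
  · refine le_iSup₂_of_le (ε / 2) (half_pos hε) ?_
    simpa only [mul_div_cancel₀ ε two_ne_zero] using iInf_PZeps_le_essSup_localEntropyAt hf (ε / 2)
  · refine le_iSup₂_of_le (ε / 2) (half_pos hε) ?_
    simpa only [mul_div_cancel₀ ε two_ne_zero] using essSup_localEntropyAt_le_iInf_PZeps (ε / 2)

end Pressure

section Partition

lemma exists_isFinPartition_subset {α : Type*} [MeasurableSpace α] {n : ℕ} {B : Fin n → Set α}
    (hB : ∀ i, MeasurableSet (B i)) (hcover : ⋃ i, B i = univ) :
    ∃ s : Finset (Set α), IsFinPartition s ∧ ∀ A ∈ s, ∃ i, A ⊆ B i := by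
  classical
  refine ⟨Finset.univ.image (disjointed B), ⟨?_, ?_, ?_⟩, ?_⟩
  · simp only [Finset.forall_mem_image, disjointed_eq_inter_compl]
    exact fun i _ => (hB i).inter (.biInter (to_countable _) fun j _ => (hB j).compl)
  · simpa using iUnion_disjointed.trans hcover
  · simpa using (disjoint_disjointed B).range_pairwise
  · simp only [Finset.forall_mem_image]
    exact fun i _ => ⟨i, disjointed_subset B i⟩

lemma exists_isFinPartition_dist_lt {X : Type*} [MetricSpace X] [MeasurableSpace X]
    [OpensMeasurableSpace X] (hX : TotallyBounded (univ : Set X)) {ε : ℝ} (hε : 0 < ε) :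
    ∃ s : Finset (Set X), IsFinPartition s ∧ ∀ A ∈ s, ∀ x ∈ A, ∀ y ∈ A, dist x y < ε := by
  obtain ⟨t, ht, hcover⟩ := Metric.totallyBounded_iff.1 hX (ε / 2) (half_pos hε)
  obtain ⟨n, p, -, rfl⟩ := ht.fin_param
  rw [biUnion_range, univ_subset_iff] at hcover
  obtain ⟨s, hs, hsub⟩ := exists_isFinPartition_subset (B := fun i => Metric.ball (p i) (ε / 2))
    (fun _ => measurableSet_ball) hcover
  refine ⟨s, hs, fun A hA x hx y hy => ?_⟩
  obtain ⟨i, hi⟩ := hsub A hA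
  exact (dist_triangle_right x y (p i)).trans_lt (add_halves ε ▸ add_lt_add (hi hx) (hi hy))

end Partition

section Itinerary

variable {X S : Type*}

/-- The word of length `n` recording the symbols met by the orbit of `x` under a coding `σ` of the
phase space. -/
def itinerary (f : X → X) (σ : X → S) (n : ℕ) (x : X) : Fin n → S := fun i => σ (f^[i] x)

lemma itinerary_preimage_singleton (f : X → X) (σ : X → S) (n : ℕ) (w : Fin n → S) :
    itinerary f σ n ⁻¹' {w} = ⋂ i : Fin n, f^[i] ⁻¹' (σ ⁻¹' {w i}) := by
  ext x
  simp [itinerary, funext_iff]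

variable [MeasurableSpace X] {f : X → X} {σ : X → S}

lemma measurableSet_itinerary_preimage_singleton (hf : Measurable f)
    (hσ : ∀ a, MeasurableSet (σ ⁻¹' {a})) (n : ℕ) (w : Fin n → S) :
    MeasurableSet (itinerary f σ n ⁻¹' {w}) := by
  rw [itinerary_preimage_singleton]
  exact .iInter fun i => hf.iterate i (hσ (w i))

variable [Fintype S] {μ : Measure X}

/-- The Shannon entropy of the distribution of the itineraries of length `n`; for the coding by the
atoms of a finite partition it is `dynH`. -/
noncomputable def itineraryEntropy (f : X → X) (μ : Measure X) (σ : X → S) (n : ℕ) : ℝ :=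
  ∑ w : Fin n → S, (μ.real (itinerary f σ n ⁻¹' {w})).negMulLog

lemma itineraryEntropy_nonneg [IsProbabilityMeasure μ] (f : X → X) (σ : X → S) (n : ℕ) :
    0 ≤ itineraryEntropy f μ σ n :=
  Finset.sum_nonneg fun _ _ => Real.negMulLog_nonneg measureReal_nonneg measureReal_le_one

lemma IsFinPartition.exists_coding {s : Finset (Set X)} (hs : IsFinPartition s) :
    ∃ σ : X → {A // A ∈ s}, (∀ x, x ∈ (σ x : Set X)) ∧ (∀ A, MeasurableSet (σ ⁻¹' {A})) ∧
      ∀ f μ n, dynH f μ s n = itineraryEntropy f μ σ n := by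
  obtain ⟨hmeas, hcover, hdisj⟩ := hs
  choose A hAs hA using fun x => mem_sUnion.1 (hcover.ge (mem_univ x))
  let σ : X → {A // A ∈ s} := fun x => ⟨A x, hAs x⟩
  have hfiber (B : {A // A ∈ s}) : σ ⁻¹' {B} = B := by
    ext x
    refine ⟨fun hx => ?_, fun hx => Subtype.ext ?_⟩
    · obtain rfl : σ x = B := hx
      exact hA x
    · by_contra hne
      exact (hdisj (hAs x) B.2 hne).le_bot ⟨hA x, hx⟩
  refine ⟨σ, hA, fun B => hfiber B ▸ hmeas B B.2, fun f μ n => ?_⟩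
  simp only [dynH, itineraryEntropy, itinerary_preimage_singleton, hfiber, Real.negMulLog,
    measureReal_def, ← Finset.sum_neg_distrib, neg_mul]

lemma lintegral_comp_eq_sum {T : Type*} [Fintype T] {φ : X → T}
    (hφ : ∀ t, MeasurableSet (φ ⁻¹' {t})) (G : T → ℝ≥0∞) :
    ∫⁻ x, G (φ x) ∂μ = ∑ t, G t * μ (φ ⁻¹' {t}) := by
  let _ : MeasurableSpace T := ⊤
  have hm : Measurable φ := measurable_to_countable' hφ
  rw [← lintegral_map measurable_from_top hm, lintegral_fintype]
  simp only [Measure.map_apply hm (measurableSet_singleton _)]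

lemma toENNReal_expRate_mul (n : ℕ) {m : ℝ≥0∞} (hm : m ≠ ∞) :
    (expRate n m).toENNReal * m = ENNReal.ofReal (m.toReal.negMulLog / n) := by
  rcases eq_or_ne m 0 with rfl | hm0
  · simp
  · rw [expRate, ENNReal.log_pos_real hm0 hm, ← EReal.coe_neg, ← EReal.coe_mul,
      EReal.real_coe_toENNReal]
    nth_rw 2 [← ENNReal.ofReal_toReal hm]
    rw [← ENNReal.ofReal_mul' ENNReal.toReal_nonneg, Real.negMulLog]
    ring_nf

lemma lintegral_expRate_itinerary [IsProbabilityMeasure μ] (hf : Measurable f)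
    (hσ : ∀ a, MeasurableSet (σ ⁻¹' {a})) (n : ℕ) :
    ∫⁻ x, (expRate n (μ (itinerary f σ n ⁻¹' {itinerary f σ n x}))).toENNReal ∂μ =
      ENNReal.ofReal (itineraryEntropy f μ σ n / n) := by
  rw [lintegral_comp_eq_sum (measurableSet_itinerary_preimage_singleton hf hσ n)
    fun w => (expRate n (μ (itinerary f σ n ⁻¹' {w}))).toENNReal]
  simp only [toENNReal_expRate_mul n (measure_ne_top μ _), itineraryEntropy, Finset.sum_div]
  exact (ENNReal.ofReal_sum_of_nonneg fun w _ => div_nonneg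
    (Real.negMulLog_nonneg measureReal_nonneg measureReal_le_one) n.cast_nonneg).symm

end Itinerary

section UpperBound

variable {X S : Type*} [MetricSpace X] [MeasurableSpace X] [BorelSpace X] [Fintype S]
  {f : X → X} {σ : X → S} {μ : Measure X} [IsProbabilityMeasure μ] {ε : ℝ}

lemma lintegral_toENNReal_localEntropyAt_le (hf : Continuous f)
    (hσ : ∀ a, MeasurableSet (σ ⁻¹' {a})) (hfine : ∀ x y, σ x = σ y → dist x y < ε) :
    ∫⁻ x, (localEntropyAt f μ ε x).toENNReal ∂μ ≤
      (liminf (fun n : ℕ => ((itineraryEntropy f μ σ n / n : ℝ) : EReal)) atTop).toENNReal := by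
  have hmap (u : ℕ → EReal) :
      (liminf u atTop).toENNReal = liminf (fun n => (u n).toENNReal) atTop :=
    Monotone.map_liminf_of_continuousAt (fun _ _ h => EReal.toENNReal_le_toENNReal h) u
      EReal.continuous_toENNReal.continuousAt
  simp only [localEntropyAt, hmap, EReal.real_coe_toENNReal]
  refine (lintegral_liminf_le fun n => ((measurable_expRate n).comp
    (measurable_measure_bowenBall hf μ n ε)).ereal_toENNReal).trans ?_
  refine liminf_le_liminf (Eventually.of_forall fun n => ?_)
  rw [← lintegral_expRate_itinerary hf.measurable hσ n]
  refine lintegral_mono fun x => EReal.toENNReal_le_toENNReal <|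
    antitone_expRate n (measure_mono fun y hy i hi => ?_)
  exact hfine _ _ (congrFun (show itinerary f σ n y = itinerary f σ n x from hy) ⟨i, hi⟩).symm

theorem essSup_localEntropy_le_ksEntropy (hX : TotallyBounded (univ : Set X))
    (hf : Continuous f) (herg : Ergodic f μ) : essSup (localEntropy f μ) μ ≤ ksEntropy f μ := by
  rw [essSup_localEntropy_eq_iSup]
  refine iSup₂_le fun ε hε => ?_
  obtain ⟨s, hs, hfine⟩ := exists_isFinPartition_dist_lt hX hε
  obtain ⟨σ, hmem, hσ, hdynH⟩ := hs.exists_coding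
  refine le_trans ?_ (le_iSup₂ s hs)
  simp only [hdynH]
  set h := liminf (fun n : ℕ => ((itineraryEntropy f μ σ n / n : ℝ) : EReal)) atTop
  have hh : 0 ≤ h := le_liminf_of_le (h := Eventually.of_forall fun n => EReal.coe_nonneg.2 <|
    div_nonneg (itineraryEntropy_nonneg f σ n) n.cast_nonneg)
  have hconst : ∀ᵐ x ∂μ, localEntropyAt f μ ε x = essSup (localEntropyAt f μ ε) μ :=
    ae_eq_essSup_of_comp_le herg (measurable_localEntropyAt hf μ ε)
      (localEntropyAt_map_le hf herg.toMeasurePreserving ε)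
  have hint := lintegral_toENNReal_localEntropyAt_le (μ := μ) hf hσ
    fun x y hxy => hfine _ (σ x).2 x (hmem x) y (hxy ▸ hmem y)
  rw [lintegral_congr_ae (hconst.mono fun x hx => congrArg _ hx), lintegral_const, measure_univ,
    mul_one] at hint
  calc essSup (localEntropyAt f μ ε) μ ≤ ((essSup (localEntropyAt f μ ε) μ).toENNReal : EReal) :=
        EReal.coe_toENNReal_eq_max ▸ le_max_right _ _
    _ ≤ (h.toENNReal : EReal) := EReal.coe_ennreal_le_coe_ennreal_iff.2 hint
    _ = h := EReal.coe_toENNReal hh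

end UpperBound

section RenewalWeight

variable {S : Type*} {q : List S → ℝ≥0}

/-- The renewal weight of a word: the sum, over all ways of cutting the word into nonempty blocks,
of the product of the weights `q` of the blocks. Recursively, the first block of `a :: l` has length
`m + 1` for some `m ≤ l.length`. -/
noncomputable def renewalWeight (q : List S → ℝ≥0) : List S → ℝ≥0
  | [] => 1
  | a :: l => ∑ m ∈ Finset.range (l.length + 1), q (a :: l.take m) * renewalWeight q (l.drop m)
  termination_by l => l.length
  decreasing_by simp only [List.length_cons, List.length_drop]; omega

lemma renewalWeight_eq_sum_Icc {l : List S} (hl : l ≠ []) :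
    renewalWeight q l =
      ∑ m ∈ Finset.Icc 1 l.length, q (l.take m) * renewalWeight q (l.drop m) := by
  obtain ⟨a, l, rfl⟩ := List.exists_cons_of_ne_nil hl
  rw [renewalWeight, Finset.range_eq_Ico, ← Finset.Ico_add_one_right_eq_Icc]
  exact Finset.sum_Ico_add' (fun m => q ((a :: l).take m) * renewalWeight q ((a :: l).drop m))
    0 (l.length + 1) 1

lemma mul_renewalWeight_le_append {u : List S} (hu : u ≠ []) (v : List S) :
    q u * renewalWeight q v ≤ renewalWeight q (u ++ v) := by
  have hmem : u.length ∈ Finset.Icc 1 (u ++ v).length :=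
    Finset.mem_Icc.2 ⟨List.length_pos_iff.2 hu, by simp⟩
  rw [renewalWeight_eq_sum_Icc (List.append_ne_nil_of_left_ne_nil hu v)]
  refine le_of_eq_of_le ?_ (Finset.single_le_sum_of_canonicallyOrdered hmem)
  rw [List.take_left, List.drop_left]

lemma renewalWeight_pos (hq : ∀ a, 0 < q [a]) (l : List S) : 0 < renewalWeight q l := by
  induction l with
  | nil => simp [renewalWeight]
  | cons a l ih =>
    exact (mul_pos (hq a) ih).trans_le (mul_renewalWeight_le_append (List.cons_ne_nil a []) l)

lemma neg_log_renewalWeight_append_le (hq : ∀ a, 0 < q [a]) {u : List S} (hu : u ≠ [])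
    (hqu : 0 < q u) (v : List S) :
    -Real.log (renewalWeight q (u ++ v)) ≤ -Real.log (q u) + -Real.log (renewalWeight q v) := by
  have hqu' : (0 : ℝ) < q u := hqu
  have hv : (0 : ℝ) < renewalWeight q v := renewalWeight_pos hq v
  rw [← neg_add, ← Real.log_mul hqu'.ne' hv.ne']
  exact neg_le_neg (Real.log_le_log (mul_pos hqu' hv) (mul_renewalWeight_le_append hu v))

lemma neg_log_renewalWeight_le {c : ℝ} (hq : ∀ a, 0 < q [a]) (hc : ∀ a, -Real.log (q [a]) ≤ c)
    (l : List S) : -Real.log (renewalWeight q l) ≤ l.length * c := by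
  induction l with
  | nil => simp [renewalWeight]
  | cons a l ih =>
    calc -Real.log (renewalWeight q (a :: l))
        ≤ -Real.log (q [a]) + -Real.log (renewalWeight q l) :=
          neg_log_renewalWeight_append_le hq (List.cons_ne_nil a []) (hq a) l
      _ ≤ c + l.length * c := add_le_add (hc a) ih
      _ = (a :: l).length * c := by rw [List.length_cons, Nat.cast_succ, add_one_mul, add_comm]

variable [Fintype S]

lemma sum_ofFn_take_mul_drop (g h : List S → ℝ≥0) (m n : ℕ) :
    ∑ w : Fin (m + n) → S, g ((List.ofFn w).take m) * h ((List.ofFn w).drop m) =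
      (∑ u : Fin m → S, g (List.ofFn u)) * ∑ v : Fin n → S, h (List.ofFn v) := by
  rw [Finset.sum_mul_sum, ← Fintype.sum_prod_type', ← (Fin.appendEquiv m n).sum_comp]
  refine Finset.sum_congr rfl fun ⟨u, v⟩ _ => ?_
  simp [Fin.appendEquiv, List.ofFn_fin_append]

lemma sum_renewalWeight_le_one
    (hq : ∀ n, ∑ m ∈ Finset.Icc 1 n, ∑ u : Fin m → S, q (List.ofFn u) ≤ 1) (n : ℕ) :
    ∑ w : Fin n → S, renewalWeight q (List.ofFn w) ≤ 1 := by
  induction n using Nat.strong_induction_on with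
  | _ n ih =>
    rcases n.eq_zero_or_pos with rfl | hn
    · simp [renewalWeight]
    have hne (w : Fin n → S) : List.ofFn w ≠ [] := by simpa using hn.ne'
    simp only [renewalWeight_eq_sum_Icc (hne _), List.length_ofFn]
    rw [Finset.sum_comm]
    refine (Finset.sum_le_sum fun m hm => ?_).trans (hq n)
    obtain ⟨hm1, hmn⟩ := Finset.mem_Icc.1 hm
    obtain ⟨r, rfl⟩ := Nat.exists_eq_add_of_le hmn
    rw [sum_ofFn_take_mul_drop]
    exact mul_le_of_le_one_right' (ih r (by omega))

end RenewalWeight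

section CodeWeight

variable {S Y : Type*} [DecidableEq S] {θ η ρ : ℝ≥0} {E : ℕ → Finset Y} {p : Y → ℕ → S}

/-- The weight of a word `l` under the prediction `p`: a factor `θ` for each position at which the
symbol is predicted correctly and a factor `η` for each error. -/
noncomputable def blockWeight (θ η : ℝ≥0) (p : ℕ → S) (l : List S) : ℝ≥0 :=
  ∏ i ∈ Finset.range l.length, if l[i]? = some (p i) then θ else η

lemma blockWeight_ofFn (p : ℕ → S) {n : ℕ} (w : Fin n → S) :
    blockWeight θ η p (List.ofFn w) = ∏ i : Fin n, if w i = p i then θ else η := by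
  rw [blockWeight, List.length_ofFn, Finset.prod_range]
  simp

variable [Fintype S]

lemma sum_blockWeight_le_one (h : θ + Fintype.card S * η ≤ 1) (p : ℕ → S) (n : ℕ) :
    ∑ w : Fin n → S, blockWeight θ η p (List.ofFn w) ≤ 1 := by
  have hsymbol (i : Fin n) : ∑ a : S, (if a = p i then θ else η) ≤ 1 :=
    calc ∑ a : S, (if a = p i then θ else η) ≤ ∑ a : S, ((if a = p i then θ else 0) + η) :=
          Finset.sum_le_sum fun a _ => by split_ifs <;> simp
      _ = θ + Fintype.card S * η := by simp [Finset.sum_add_distrib]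
      _ ≤ 1 := h
  simp only [blockWeight_ofFn]
  rw [← Fintype.prod_sum fun (i : Fin n) a => if a = p i then θ else η]
  exact Finset.prod_le_one' fun i _ => hsymbol i

/-- The block weights of the code used to compress itineraries. A block is either a single symbol
written verbatim, or a word of some length `m` encoded by a codeword `y ∈ E m` together with the
errors of the prediction `p y`. -/
noncomputable def codeWeight (ρ θ η : ℝ≥0) (E : ℕ → Finset Y) (p : Y → ℕ → S) (l : List S) : ℝ≥0 :=
  (if l.length = 1 then (2 * Fintype.card S : ℝ≥0)⁻¹ else 0) +
    ∑ y ∈ E l.length, ρ ^ l.length * blockWeight θ η (p y) l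

lemma inv_two_mul_card_le_codeWeight (a : S) :
    (2 * Fintype.card S : ℝ≥0)⁻¹ ≤ codeWeight ρ θ η E p [a] := by
  simp [codeWeight]

lemma pow_mul_blockWeight_le_codeWeight {y : Y} {l : List S} (hy : y ∈ E l.length) :
    ρ ^ l.length * blockWeight θ η (p y) l ≤ codeWeight ρ θ η E p l :=
  (Finset.single_le_sum_of_canonicallyOrdered (f := fun y => ρ ^ l.length * blockWeight θ η (p y) l)
    hy).trans le_add_self

lemma sum_codeWeight_le (h : θ + Fintype.card S * η ≤ 1) (m : ℕ) :
    ∑ w : Fin m → S, codeWeight ρ θ η E p (List.ofFn w) ≤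
      (if m = 1 then 2⁻¹ else 0) + (E m).card * ρ ^ m := by
  simp only [codeWeight, List.length_ofFn, Finset.sum_add_distrib]
  refine add_le_add ?_ ?_
  · split_ifs with hm
    · subst hm
      simp only [Finset.sum_const, Finset.card_univ, Fintype.card_fun, Fintype.card_fin, pow_one,
        nsmul_eq_mul, mul_inv, mul_left_comm _ (2⁻¹ : ℝ≥0)]
      exact mul_le_of_le_one_right' mul_inv_le_one
    · simp
  · rw [Finset.sum_comm, ← nsmul_eq_mul]
    refine Finset.sum_le_card_nsmul _ _ _ fun y _ => ?_
    rw [← Finset.mul_sum]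
    exact mul_le_of_le_one_right' (sum_blockWeight_le_one h (p y) m)

lemma sum_Icc_sum_codeWeight_le_one (h : θ + Fintype.card S * η ≤ 1)
    (hE : ∀ n, ∑ m ∈ Finset.Icc 1 n, (E m).card * ρ ^ m ≤ 2⁻¹) (n : ℕ) :
    ∑ m ∈ Finset.Icc 1 n, ∑ w : Fin m → S, codeWeight ρ θ η E p (List.ofFn w) ≤ 1 := by
  refine (Finset.sum_le_sum fun m _ => sum_codeWeight_le h m).trans ?_
  rw [Finset.sum_add_distrib, ← add_halves (1 : ℝ≥0), one_div]
  refine add_le_add ?_ (hE n)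
  rw [Finset.sum_ite_eq']
  split_ifs <;> simp

end CodeWeight

section Gibbs

lemma negMulLog_le_sub_add_mul_neg_log {p q : ℝ} (hp : 0 ≤ p) (hq : 0 < q) :
    p.negMulLog ≤ q - p + p * -Real.log q := by
  rcases hp.eq_or_lt with rfl | hp
  · simpa using hq.le
  · have h := mul_le_mul_of_nonneg_left (Real.log_le_sub_one_of_pos (div_pos hq hp)) hp.le
    rw [Real.log_div hq.ne' hp.ne', mul_sub_one, mul_div_cancel₀ q hp.ne'] at h
    rw [Real.negMulLog]
    linarith

lemma sum_negMulLog_le_sum_mul_neg_log {T : Type*} [Fintype T] {P Q : T → ℝ}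
    (hP : ∀ t, 0 ≤ P t) (hQ : ∀ t, 0 < Q t) (hle : ∑ t, Q t ≤ ∑ t, P t) :
    ∑ t, (P t).negMulLog ≤ ∑ t, P t * -Real.log (Q t) := by
  have h := Finset.sum_le_sum fun t (_ : t ∈ Finset.univ) =>
    negMulLog_le_sub_add_mul_neg_log (hP t) (hQ t)
  rw [Finset.sum_add_distrib, Finset.sum_sub_distrib] at h
  linarith

variable {X S T : Type*} [MeasurableSpace X] {μ : Measure X}

lemma integral_comp_eq_sum [IsFiniteMeasure μ] [Fintype T] {φ : X → T}
    (hφ : ∀ t, MeasurableSet (φ ⁻¹' {t})) (G : T → ℝ) :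
    Integrable (fun x => G (φ x)) μ ∧ ∫ x, G (φ x) ∂μ = ∑ t, μ.real (φ ⁻¹' {t}) * G t := by
  let _ : MeasurableSpace T := ⊤
  have hm : Measurable φ := measurable_to_countable' hφ
  refine ⟨Integrable.of_finite.comp_measurable hm, ?_⟩
  rw [← integral_map hm.aemeasurable measurable_from_top.aestronglyMeasurable,
    integral_fintype .of_finite]
  simp only [map_measureReal_apply hm (measurableSet_singleton _), smul_eq_mul]

lemma itineraryEntropy_le_integral [Fintype S] [IsProbabilityMeasure μ] {f : X → X} {σ : X → S}
    (hf : Measurable f) (hσ : ∀ a, MeasurableSet (σ ⁻¹' {a})) {n : ℕ} {Q : (Fin n → S) → ℝ}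
    (hQ : ∀ w, 0 < Q w) (hQ1 : ∑ w, Q w ≤ 1) {g : X → ℝ} (hg : Integrable g μ)
    (hle : ∀ x, -Real.log (Q (itinerary f σ n x)) ≤ g x) :
    itineraryEntropy f μ σ n ≤ ∫ x, g x ∂μ := by
  have hmeas := measurableSet_itinerary_preimage_singleton hf hσ n
  have hsum : ∑ w, μ.real (itinerary f σ n ⁻¹' {w}) = 1 := by
    simpa using (integral_comp_eq_sum (μ := μ) hmeas fun _ => 1).2.symm
  obtain ⟨hint, heq⟩ := integral_comp_eq_sum (μ := μ) hmeas fun w => -Real.log (Q w)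
  calc itineraryEntropy f μ σ n
      ≤ ∑ w, μ.real (itinerary f σ n ⁻¹' {w}) * -Real.log (Q w) :=
        sum_negMulLog_le_sum_mul_neg_log (fun _ => measureReal_nonneg) hQ (hQ1.trans hsum.ge)
    _ = ∫ x, -Real.log (Q (itinerary f σ n x)) ∂μ := heq.symm
    _ ≤ ∫ x, g x ∂μ := integral_mono hint hg hle

end Gibbs

section BirkhoffSum

variable {X : Type*} {f : X → X} {φ : X → ℝ}

lemma le_birkhoffSum_add_of_tiling {F : ℕ → X → ℝ} {M : ℕ} {C : ℝ} (hφ : ∀ x, 0 ≤ φ x)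
    (hF : ∀ n ≤ M, ∀ x, F n x ≤ C)
    (htile : ∀ x, ∃ m, 0 < m ∧ m ≤ M + 1 ∧
      ∀ n, F (m + n) x ≤ birkhoffSum f φ m x + F n (f^[m] x)) (n : ℕ) (x : X) :
    F n x ≤ birkhoffSum f φ n x + C := by
  induction n using Nat.strong_induction_on generalizing x with
  | _ n ih =>
    rcases le_or_gt n M with hn | hn
    · exact le_add_of_nonneg_of_le (Finset.sum_nonneg fun i _ => hφ _) (hF n hn x)
    · obtain ⟨m, hm, hmM, hle⟩ := htile x
      obtain ⟨r, rfl⟩ := Nat.exists_eq_add_of_le (hmM.trans hn)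
      rw [birkhoffSum_add, add_assoc]
      exact (hle r).trans (add_le_add_right (ih r (by omega) _) _)

variable [MeasurableSpace X] {μ : Measure X}

lemma integral_birkhoffSum (hinv : MeasurePreserving f μ μ) (hφ : Integrable φ μ) (n : ℕ) :
    Integrable (birkhoffSum f φ n) μ ∧ ∫ x, birkhoffSum f φ n x ∂μ = n * ∫ x, φ x ∂μ := by
  have hint (i : ℕ) : Integrable (fun x => φ (f^[i] x)) μ :=
    (hinv.iterate i).integrable_comp_of_integrable hφ
  refine ⟨integrable_finsetSum _ fun i _ => hint i, ?_⟩
  have heq (i : ℕ) : ∫ x, φ (f^[i] x) ∂μ = ∫ x, φ x ∂μ := by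
    have h := integral_map (hinv.iterate i).aemeasurable
      ((hinv.iterate i).map_eq.symm ▸ hφ.aestronglyMeasurable)
    rw [← h, (hinv.iterate i).map_eq]
  simp only [birkhoffSum]
  rw [integral_finsetSum _ fun i _ => hint i]
  simp [heq]

end BirkhoffSum

section CodeLength

variable {X S Y : Type*} {f : X → X} {σ : X → S}

lemma ofFn_itinerary_add (f : X → X) (σ : X → S) (m n : ℕ) (x : X) :
    List.ofFn (itinerary f σ (m + n) x) =
      List.ofFn (itinerary f σ m x) ++ List.ofFn (itinerary f σ n (f^[m] x)) := by
  rw [List.ofFn_add]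
  simp only [itinerary, Fin.val_natAdd, add_comm m, Function.iterate_add_apply]
  rfl

variable [DecidableEq S] {θ η ρ : ℝ≥0} {E : ℕ → Finset Y} {U : Set X}

lemma blockWeight_pos (hθ : 0 < θ) (hη : 0 < η) (p : ℕ → S) (l : List S) :
    0 < blockWeight θ η p l :=
  Finset.prod_pos fun _ _ => by split_ifs <;> assumption

lemma neg_log_nonneg {c : ℝ≥0} (hc : c ≤ 1) : 0 ≤ -Real.log c :=
  neg_nonneg.2 (Real.log_nonpos c.coe_nonneg hc)

lemma neg_log_blockWeight_itinerary_le (hθ : 0 < θ) (hθ1 : θ ≤ 1) (hη : 0 < η) (hη1 : η ≤ 1)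
    {p : ℕ → S} {m : ℕ} {x : X} (hp : ∀ i < m, f^[i] x ∉ U → σ (f^[i] x) = p i) :
    -Real.log (blockWeight θ η p (List.ofFn (itinerary f σ m x))) ≤
      birkhoffSum f (fun z => -Real.log θ + U.indicator (fun _ => -Real.log η) z) m x := by
  have hne (i : Fin m) : ((if itinerary f σ m x i = p i then θ else η : ℝ≥0) : ℝ) ≠ 0 := by
    split_ifs <;> simp [hθ.ne', hη.ne']
  rw [blockWeight_ofFn, NNReal.coe_prod, Real.log_prod fun i _ => hne i, birkhoffSum,
    ← Finset.sum_neg_distrib, Finset.sum_range]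
  refine Finset.sum_le_sum fun i _ => ?_
  by_cases hU : f^[i] x ∈ U
  · rw [indicator_of_mem hU]
    split_ifs
    · exact le_add_of_nonneg_right (neg_log_nonneg hη1)
    · exact le_add_of_nonneg_left (neg_log_nonneg hθ1)
  · rw [indicator_of_notMem hU, add_zero, itinerary, if_pos (hp i i.2 hU)]

variable [Fintype S] {p : Y → ℕ → S}

lemma codeWeight_singleton_pos (a : S) : 0 < codeWeight ρ θ η E p [a] := by
  have : Nonempty S := ⟨a⟩
  exact lt_of_lt_of_le (by positivity) (inv_two_mul_card_le_codeWeight a)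

lemma neg_log_codeWeight_singleton_le (a : S) :
    -Real.log (codeWeight ρ θ η E p [a]) ≤ Real.log (2 * Fintype.card S) := by
  have : Nonempty S := ⟨a⟩
  have h : ((2 * Fintype.card S : ℝ)⁻¹) ≤ codeWeight ρ θ η E p [a] := by
    exact_mod_cast NNReal.coe_le_coe.2 (inv_two_mul_card_le_codeWeight a)
  rw [neg_le, ← Real.log_inv]
  exact Real.log_le_log (by positivity) h

lemma neg_log_codeWeight_itinerary_le (hρ : 0 < ρ) (hθ : 0 < θ) (hθ1 : θ ≤ 1) (hη : 0 < η)
    (hη1 : η ≤ 1) {m : ℕ} {y : Y} (hy : y ∈ E m) {x : X}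
    (hp : ∀ i < m, f^[i] x ∉ U → σ (f^[i] x) = p y i) :
    0 < codeWeight ρ θ η E p (List.ofFn (itinerary f σ m x)) ∧
      -Real.log (codeWeight ρ θ η E p (List.ofFn (itinerary f σ m x))) ≤
        m * -Real.log ρ +
          birkhoffSum f (fun z => -Real.log θ + U.indicator (fun _ => -Real.log η) z) m x := by
  set l := List.ofFn (itinerary f σ m x)
  have hblock := blockWeight_pos hθ hη (p y) l
  have hle : ρ ^ m * blockWeight θ η (p y) l ≤ codeWeight ρ θ η E p l := by
    simpa [l] using pow_mul_blockWeight_le_codeWeight (ρ := ρ) (θ := θ) (η := η) (p := p)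
      (l := l) (by simpa [l] using hy)
  have hpos : 0 < ρ ^ m * blockWeight θ η (p y) l := mul_pos (pow_pos hρ m) hblock
  refine ⟨hpos.trans_le hle, ?_⟩
  calc -Real.log (codeWeight ρ θ η E p l) ≤ -Real.log ((ρ : ℝ) ^ m * blockWeight θ η (p y) l) :=
        neg_le_neg (Real.log_le_log (mod_cast hpos) (mod_cast hle))
    _ = m * -Real.log ρ + -Real.log (blockWeight θ η (p y) l) := by
        rw [Real.log_mul (by positivity) (by positivity), Real.log_pow]
        ring
    _ ≤ _ := add_le_add_right (neg_log_blockWeight_itinerary_le hθ hθ1 hη hη1 hp) _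

/-- The cost per unit time of encoding an itinerary: `-log (ρ * θ)` everywhere, an extra `-log η` on
the set `U` where predictions may fail, and an extra `log (2 * c)` on the set `D` of points that
start no encodable block. -/
noncomputable def codeCost (ρ θ η c : ℝ) (U D : Set X) (x : X) : ℝ :=
  (-Real.log ρ + -Real.log θ) + U.indicator (fun _ => -Real.log η) x +
    D.indicator (fun _ => Real.log (2 * c)) x

lemma mul_neg_log_add_birkhoffSum_le_birkhoffSum_codeCost {c : ℝ} (hc : 0 ≤ Real.log (2 * c))
    (ρ θ η : ℝ) (U D : Set X) (m : ℕ) (x : X) :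
    m * -Real.log ρ +
        birkhoffSum f (fun z => -Real.log θ + U.indicator (fun _ => -Real.log η) z) m x ≤
      birkhoffSum f (codeCost ρ θ η c U D) m x := by
  rw [← nsmul_eq_mul, ← Finset.card_range m, ← Finset.sum_const, Finset.card_range, birkhoffSum,
    ← Finset.sum_add_distrib]
  refine Finset.sum_le_sum fun i _ => ?_
  rw [← add_assoc]
  exact le_add_of_nonneg_right (indicator_nonneg (fun _ _ => hc) _)

lemma neg_log_renewalWeight_itinerary_le {D : Set X} {M : ℕ} (hρ : 0 < ρ) (hρ1 : ρ ≤ 1)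
    (hθ : 0 < θ) (hθ1 : θ ≤ 1) (hη : 0 < η) (hη1 : η ≤ 1)
    (hcode : ∀ x ∉ D, ∃ m, 0 < m ∧ m ≤ M + 1 ∧ ∃ y ∈ E m, ∀ i < m,
      f^[i] x ∉ U → σ (f^[i] x) = p y i) (n : ℕ) (x : X) :
    -Real.log (renewalWeight (codeWeight ρ θ η E p) (List.ofFn (itinerary f σ n x))) ≤
      birkhoffSum f (codeCost ρ θ η (Fintype.card S) U D) n x +
        M * Real.log (2 * Fintype.card S) := by
  have : Nonempty S := ⟨σ x⟩
  have hk : 0 ≤ Real.log (2 * Fintype.card S) := by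
    exact_mod_cast Real.log_natCast_nonneg (2 * Fintype.card S)
  have hUD (z : X) : 0 ≤ (-Real.log ρ + -Real.log θ) + U.indicator (fun _ => -Real.log η) z :=
    add_nonneg (add_nonneg (neg_log_nonneg hρ1) (neg_log_nonneg hθ1))
      (indicator_nonneg (fun _ _ => neg_log_nonneg hη1) z)
  refine le_birkhoffSum_add_of_tiling
    (F := fun n x =>
      -Real.log (renewalWeight (codeWeight ρ θ η E p) (List.ofFn (itinerary f σ n x))))
    (M := M) (fun z => add_nonneg (hUD z) (indicator_nonneg (fun _ _ => hk) z))
    (fun n hn x => ?_) (fun x => ?_) n x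
  · refine (neg_log_renewalWeight_le codeWeight_singleton_pos neg_log_codeWeight_singleton_le
      _).trans ?_
    rw [List.length_ofFn]
    gcongr
  by_cases hx : x ∈ D
  · refine ⟨1, one_pos, by omega, fun n => ?_⟩
    rw [ofFn_itinerary_add]
    refine (neg_log_renewalWeight_append_le codeWeight_singleton_pos (by simp)
      (codeWeight_singleton_pos _) _).trans (add_le_add_left ?_ _)
    rw [birkhoffSum_one, indicator_of_mem hx]
    exact (neg_log_codeWeight_singleton_le _).trans (le_add_of_nonneg_left (hUD x))
  · obtain ⟨m, hm, hmM, y, hy, hp⟩ := hcode x hx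
    obtain ⟨hpos, hle⟩ := neg_log_codeWeight_itinerary_le hρ hθ hθ1 hη hη1 hy hp
    refine ⟨m, hm, hmM, fun n => ?_⟩
    rw [ofFn_itinerary_add]
    refine (neg_log_renewalWeight_append_le codeWeight_singleton_pos (by simpa using hm.ne')
      hpos _).trans (add_le_add_left (hle.trans ?_) _)
    exact mul_neg_log_add_birkhoffSum_le_birkhoffSum_codeCost hk ρ θ η U D m x

end CodeLength

section EntropyBound

variable {X S Y : Type*} [MeasurableSpace X] [Fintype S] {f : X → X} {σ : X → S} {U D : Set X}
  {θ η ρ : ℝ≥0} {E : ℕ → Finset Y} {p : Y → ℕ → S} {μ : Measure X} [IsProbabilityMeasure μ]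

lemma integral_codeCost (hU : MeasurableSet U) (hD : MeasurableSet D) (ρ θ η c : ℝ) :
    Integrable (codeCost ρ θ η c U D) μ ∧ ∫ x, codeCost ρ θ η c U D x ∂μ =
      (-Real.log ρ + -Real.log θ) + μ.real U * -Real.log η + μ.real D * Real.log (2 * c) := by
  have hconst : Integrable (fun _ : X => -Real.log ρ + -Real.log θ) μ := integrable_const _
  have hintU := (integrable_const (μ := μ) (-Real.log η)).indicator hU
  have hintD := (integrable_const (μ := μ) (Real.log (2 * c))).indicator hD
  refine ⟨(hconst.add hintU).add hintD, ?_⟩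
  refine (integral_add (hconst.add hintU) hintD).trans ?_
  rw [integral_add' hconst hintU]
  simp [integral_indicator_const, hU, hD]

lemma itineraryEntropy_le_mul_integral_codeCost (hinv : MeasurePreserving f μ μ)
    (hσ : ∀ a, MeasurableSet (σ ⁻¹' {a})) (hU : MeasurableSet U) (hD : MeasurableSet D)
    (hρ : 0 < ρ) (hρ1 : ρ ≤ 1) (hθ : 0 < θ) (hη : 0 < η) (h : θ + Fintype.card S * η ≤ 1)
    (hE : ∀ n, ∑ m ∈ Finset.Icc 1 n, (E m).card * ρ ^ m ≤ 2⁻¹) {M : ℕ}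
    (hcode : ∀ x ∉ D, ∃ m, 0 < m ∧ m ≤ M + 1 ∧ ∃ y ∈ E m, ∀ i < m,
      f^[i] x ∉ U → σ (f^[i] x) = p y i) (n : ℕ) :
    itineraryEntropy f μ σ n ≤ n * ∫ x, codeCost ρ θ η (Fintype.card S) U D x ∂μ +
      M * Real.log (2 * Fintype.card S) := by
  classical
  obtain ⟨x⟩ : Nonempty X := nonempty_of_isProbabilityMeasure μ
  have : Nonempty S := ⟨σ x⟩
  have hη1 : η ≤ 1 := (le_mul_of_one_le_left' (by exact_mod_cast Fintype.card_pos)).trans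
    (le_add_self.trans h)
  obtain ⟨hint, heq⟩ := integral_birkhoffSum hinv
    (integral_codeCost (μ := μ) hU hD ρ θ η (Fintype.card S)).1 n
  calc itineraryEntropy f μ σ n
      ≤ ∫ x, (birkhoffSum f (codeCost ρ θ η (Fintype.card S) U D) n x +
          M * Real.log (2 * Fintype.card S)) ∂μ :=
        itineraryEntropy_le_integral hinv.measurable hσ
          (Q := fun w => renewalWeight (codeWeight ρ θ η E p) (List.ofFn w))
          (fun w => renewalWeight_pos codeWeight_singleton_pos _)
          (mod_cast sum_renewalWeight_le_one (sum_Icc_sum_codeWeight_le_one h hE) n)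
          (hint.add (integrable_const _))
          (neg_log_renewalWeight_itinerary_le hρ hρ1 hθ (le_self_add.trans h) hη hη1 hcode n)
    _ = n * ∫ x, codeCost ρ θ η (Fintype.card S) U D x ∂μ +
          M * Real.log (2 * Fintype.card S) := by
        rw [integral_add hint (integrable_const _), heq]
        simp

end EntropyBound

section Lusin

variable {X : Type*} [MetricSpace X] [MeasurableSpace X] [BorelSpace X] {μ : Measure X}
  [IsFiniteMeasure μ]

lemma exists_measure_lt_and_mem_of_dist_lt {A : Set X} (hA : MeasurableSet A) {c : ℝ≥0∞}
    (hc : c ≠ 0) :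
    ∃ U, MeasurableSet U ∧ μ U < c ∧
      ∀ᶠ δ in 𝓝[>] (0 : ℝ), ∀ x ∉ U, ∀ y ∉ U, dist x y < δ → x ∈ A → y ∈ A := by
  obtain ⟨K, hKA, hK, hAK⟩ := hA.exists_isClosed_sdiff_lt (measure_ne_top μ A)
    (ENNReal.half_pos hc).ne'
  have hlim : Tendsto (fun r => μ (Metric.thickening r K)) (𝓝[>] 0) (𝓝 (μ K)) :=
    tendsto_measure_thickening_of_isClosed ⟨1, one_pos, measure_ne_top μ _⟩ hK
  obtain ⟨r, hr, hr0⟩ := ((hlim.eventually_lt_const (ENNReal.lt_add_right (measure_ne_top μ K)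
    (ENNReal.half_pos hc).ne')).and self_mem_nhdsWithin).exists
  have hrK : μ (Metric.thickening r K \ K) < c / 2 :=
    measure_sdiff_lt_of_lt_add hK.measurableSet.nullMeasurableSet
      (Metric.self_subset_thickening hr0 K) (measure_ne_top μ K) hr
  refine ⟨(A \ K) ∪ (Metric.thickening r K \ K), (hA.diff hK.measurableSet).union
    (Metric.isOpen_thickening.measurableSet.diff hK.measurableSet), ?_, ?_⟩
  · exact (measure_union_le _ _).trans_lt (ENNReal.add_halves c ▸ ENNReal.add_lt_add hAK hrK)
  filter_upwards [Ioo_mem_nhdsGT hr0] with δ hδ x hx y hy hxy hxA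
  have hxK : x ∈ K := by_contra fun h => hx (.inl ⟨hxA, h⟩)
  have hyr : y ∈ Metric.thickening r K :=
    Metric.mem_thickening_iff.2 ⟨x, hxK, dist_comm x y ▸ hxy.trans hδ.2⟩
  exact hKA (by_contra fun h => hy (.inr ⟨hyr, h⟩))

-- Lusin's theorem for a finite-valued function.
lemma exists_measure_lt_and_eq_of_dist_lt {S : Type*} [Finite S] {σ : X → S}
    (hσ : ∀ a, MeasurableSet (σ ⁻¹' {a})) {c : ℝ≥0∞} (hc : c ≠ 0) :
    ∃ U, MeasurableSet U ∧ μ U < c ∧ ∃ δ > 0, ∀ x ∉ U, ∀ y ∉ U, dist x y < δ → σ x = σ y := by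
  obtain ⟨c', hc', hsum⟩ := ENNReal.exists_pos_sum_of_countable hc S
  choose U hU hμU hUδ using fun a =>
    exists_measure_lt_and_mem_of_dist_lt (μ := μ) (hσ a) (ENNReal.coe_ne_zero.2 (hc' a).ne')
  obtain ⟨δ, hδ, hδ0⟩ := ((eventually_all.2 hUδ).and self_mem_nhdsWithin).exists
  refine ⟨⋃ a, U a, .iUnion hU, ?_, δ, hδ0, fun x hx y hy hxy => ?_⟩
  · exact (measure_iUnion_le U).trans_lt ((ENNReal.tsum_le_tsum fun a => (hμU a).le).trans_lt hsum)
  · simp only [mem_iUnion, not_exists] at hx hy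
    exact (hδ (σ x) x (hx _) y (hy _) hxy rfl).symm

lemma exists_prediction {S : Type*} [Finite S] {σ : X → S}
    (hσ : ∀ a, MeasurableSet (σ ⁻¹' {a})) {c : ℝ≥0∞} (hc : c ≠ 0) :
    ∃ U, MeasurableSet U ∧ μ U < c ∧ ∃ δ > 0, ∃ π : X → S,
      ∀ y, ∀ z ∉ U, dist y z < δ → σ z = π y := by
  obtain ⟨U, hU, hμU, δ, hδ, h⟩ := exists_measure_lt_and_eq_of_dist_lt (μ := μ) hσ hc
  have hπ (y : X) : ∃ a, ∀ z ∉ U, dist y z < δ / 2 → σ z = a := by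
    by_cases hy : ∃ z ∉ U, dist y z < δ / 2
    · obtain ⟨z, hz, hyz⟩ := hy
      exact ⟨σ z, fun x hx hyx => h x hx z hz <|
        (dist_triangle_left x z y).trans_lt (add_halves δ ▸ add_lt_add hyx hyz)⟩
    · exact ⟨σ y, fun z hz hyz => (hy ⟨z, hz, hyz⟩).elim⟩
  choose π hπ using hπ
  exact ⟨U, hU, hμU, δ / 2, half_pos hδ, π, hπ⟩

end Lusin

section Codebook

variable {X : Type*} [MeasurableSpace X]

lemma exists_measure_compl_accumulate_lt {μ : Measure X} [IsProbabilityMeasure μ] {V : ℕ → Set X}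
    (hV : ∀ m, MeasurableSet (V m)) (hcover : ∀ᵐ x ∂μ, ∃ m, x ∈ V m) {c : ℝ≥0∞} (hc : c ≠ 0) :
    ∃ M, μ (accumulate V M)ᶜ < c := by
  have hone : μ (⋃ m, V m) = 1 :=
    mem_ae_iff_prob_eq_one (.iUnion hV) |>.1 (hcover.mono fun _ => mem_iUnion.2)
  have hlim : Tendsto (fun M => 1 - μ (accumulate V M)) atTop (𝓝 (1 - 1)) :=
    ENNReal.Tendsto.sub tendsto_const_nhds (hone ▸ tendsto_measure_iUnion_accumulate)
      (.inl ENNReal.one_ne_top)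
  rw [tsub_self] at hlim
  obtain ⟨M, hM⟩ := (hlim.eventually_lt_const (pos_iff_ne_zero.2 hc)).exists
  exact ⟨M, (prob_compl_eq_one_sub (.biUnion (to_countable _) fun m _ => hV m)).trans_lt hM⟩

variable [MetricSpace X] [OpensMeasurableSpace X] {f : X → X}

lemma exists_codebook (hf : Continuous f) (μ : Measure X) [IsProbabilityMeasure μ] (ε : ℝ)
    {a b : ℝ} (hab : a < b) :
    ∃ E : ℕ → Finset X, E 0 = ∅ ∧
      (∀ n, ∑ m ∈ Finset.Icc 1 n, (E m).card * (Real.exp (-b)).toNNReal ^ m ≤ 2⁻¹) ∧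
      ∀ x, localEntropyAt f μ ε x < a → ∃ m, ∃ y ∈ E m, x ∈ bowenBall f y m (2 * ε) := by
  obtain ⟨E, hcard, hmem⟩ := exists_finset_card_le_and_frequently_mem_bowenBall hf μ ε a
  set r := ENNReal.ofReal (Real.exp (-(b - a)))
  have hr : r < 1 := ofReal_exp_neg_lt_one (sub_pos.2 hab)
  have hsum : ∑' m, r ^ m ≠ ∞ := by
    rw [ENNReal.tsum_geometric]
    exact ENNReal.inv_ne_top.2 (tsub_pos_of_lt hr).ne'
  obtain ⟨s, hs, h0s⟩ := (((ENNReal.tendsto_tsum_compl_atTop_zero hsum).eventually_le_const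
    (u := 2⁻¹) (by simp)).and (eventually_ge_atTop {0})).exists
  refine ⟨fun m => if m ∈ s then ∅ else E m, if_pos (by simpa using h0s), fun n => ?_,
    fun x hx => ?_⟩
  · have hterm (m : ℕ) : ((if m ∈ s then ∅ else E m).card : ℝ≥0∞) *
        ENNReal.ofReal (Real.exp (-b)) ^ m ≤ indicator {m | m ∉ s} (r ^ ·) m := by
      by_cases hm : m ∈ s
      · simp [hm]
      · rw [if_neg hm, indicator_of_mem (show m ∈ {m | m ∉ s} from hm)]
        exact mul_ofReal_exp_pow_le (hcard m) b
    rw [← ENNReal.coe_le_coe, ENNReal.coe_inv_two]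
    push_cast
    calc _ ≤ ∑ m ∈ Finset.Icc 1 n, indicator {m | m ∉ s} (r ^ ·) m :=
          Finset.sum_le_sum fun m _ => hterm m
      _ ≤ ∑' m, indicator {m | m ∉ s} (r ^ ·) m := ENNReal.sum_le_tsum _
      _ = ∑' m : {m // m ∉ s}, r ^ (m : ℕ) := (tsum_subtype {m | m ∉ s} (r ^ ·)).symm
      _ ≤ 2⁻¹ := hs
  · have hs' : ∀ᶠ m in atTop, m ∉ s := Nat.cofinite_eq_atTop ▸ s.eventually_cofinite_notMem
    obtain ⟨m, ⟨y, hy, hxy⟩, hm⟩ := ((hmem x hx).and_eventually hs').exists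
    exact ⟨m, y, by simpa [hm] using hy, hxy⟩

end Codebook

section LowerBound

variable {X : Type*} [MetricSpace X] [MeasurableSpace X] [BorelSpace X] {f : X → X}
  {μ : Measure X} [IsProbabilityMeasure μ]

lemma exists_finite_code (hf : Continuous f) {S : Type*} [Finite S] {σ : X → S}
    (hσ : ∀ s, MeasurableSet (σ ⁻¹' {s})) {a b : ℝ} (ha : ∀ᵐ x ∂μ, localEntropy f μ x < a)
    (hab : a < b) {κ : ℝ} (hκ : 0 < κ) :
    ∃ (U D : Set X) (E : ℕ → Finset X) (p : X → ℕ → S) (M : ℕ),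
      MeasurableSet U ∧ MeasurableSet D ∧ μ.real U ≤ κ ∧ μ.real D ≤ κ ∧
      (∀ n, ∑ m ∈ Finset.Icc 1 n, (E m).card * (Real.exp (-b)).toNNReal ^ m ≤ 2⁻¹) ∧
      ∀ x ∉ D, ∃ m, 0 < m ∧ m ≤ M ∧ ∃ y ∈ E m, ∀ i < m, f^[i] x ∉ U → σ (f^[i] x) = p y i := by
  have hc : ENNReal.ofReal κ ≠ 0 := (ENNReal.ofReal_pos.2 hκ).ne'
  obtain ⟨U, hU, hμU, δ, hδ, π, hπ⟩ := exists_prediction (μ := μ) hσ hc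
  obtain ⟨E, hE0, hE, hcode⟩ := exists_codebook hf μ (δ / 2) hab
  rw [mul_div_cancel₀ δ two_ne_zero] at hcode
  let V (m : ℕ) : Set X := ⋃ y ∈ E m, bowenBall f y m δ
  have hV (m : ℕ) : MeasurableSet (V m) :=
    .biUnion (E m).countable_toSet fun y _ => (isOpen_bowenBall hf y m δ).measurableSet
  have hcover : ∀ᵐ x ∂μ, ∃ m, x ∈ V m := by
    filter_upwards [ha] with x hx
    simpa only [V, mem_iUnion₂, exists_prop] using
      hcode x ((localEntropyAt_le_localEntropy f μ (half_pos hδ) x).trans_lt hx)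
  obtain ⟨M, hM⟩ := exists_measure_compl_accumulate_lt hV hcover hc
  refine ⟨U, (accumulate V M)ᶜ, E, fun y i => π (f^[i] y), M, hU,
    (MeasurableSet.biUnion (to_countable _) fun m _ => hV m).compl,
    ENNReal.toReal_le_of_le_ofReal hκ.le hμU.le, ENNReal.toReal_le_of_le_ofReal hκ.le hM.le,
    hE, fun x hx => ?_⟩
  obtain ⟨m, hmM, hm⟩ := mem_accumulate.1 (not_notMem.1 hx)
  obtain ⟨y, hy, hxy⟩ := mem_iUnion₂.1 hm
  have hm0 : m ≠ 0 := by
    rintro rfl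
    simp [hE0] at hy
  exact ⟨m, pos_of_ne_zero hm0, hmM, y, hy, fun i hi hxU => hπ _ _ hxU (hxy i hi)⟩

lemma exists_pos_add_mul_le_one_and_neg_log_le (k : ℕ) {t : ℝ} (ht : 0 < t) :
    ∃ θ η : ℝ≥0, 0 < θ ∧ 0 < η ∧ θ + k * η ≤ 1 ∧ -Real.log θ ≤ t := by
  set θ := (Real.exp (-t)).toNNReal
  have hθ : (θ : ℝ) = Real.exp (-t) := Real.coe_toNNReal _ (Real.exp_pos _).le
  have hθ1 : θ < 1 := by
    rw [← NNReal.coe_lt_coe, hθ]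
    exact Real.exp_lt_one_iff.2 (neg_lt_zero.2 ht)
  refine ⟨θ, (1 - θ) / (k + 1), Real.toNNReal_pos.2 (Real.exp_pos _),
    div_pos (tsub_pos_of_lt hθ1) (by positivity), ?_, by simp [hθ]⟩
  calc θ + k * ((1 - θ) / (k + 1)) ≤ θ + (k + 1) * ((1 - θ) / (k + 1)) := by gcongr; simp
    _ = 1 := by rw [mul_div_cancel₀ _ (by positivity), add_tsub_cancel_of_le hθ1.le]

lemma exists_itineraryEntropy_le (hf : Continuous f) (hinv : MeasurePreserving f μ μ)
    {S : Type*} [Fintype S] {σ : X → S} (hσ : ∀ s, MeasurableSet (σ ⁻¹' {s})) {a b : ℝ}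
    (ha : ∀ᵐ x ∂μ, localEntropy f μ x < a) (hab : a < b) :
    ∃ C, ∀ n, itineraryEntropy f μ σ n ≤ n * b + C := by
  obtain ⟨t, ht, rfl⟩ : ∃ t > 0, b = a + t + t + t := ⟨(b - a) / 3, by linarith, by ring⟩
  obtain ⟨θ, η, hθ, hη, hsum, hθt⟩ :=
    exists_pos_add_mul_le_one_and_neg_log_le (Fintype.card S) ht
  set L := |-Real.log η| + |Real.log (2 * Fintype.card S)|
  obtain ⟨U, D, E, p, M, hU, hD, hμU, hμD, hE, hcode⟩ :=
    exists_finite_code hf hσ ha (lt_add_of_pos_right a ht) (κ := t / (L + 1)) (by positivity)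
  have ha0 : 0 ≤ a := by
    obtain ⟨x, hx⟩ := ha.exists
    exact_mod_cast (localEntropy_nonneg f x).trans hx.le
  set ρ := (Real.exp (-(a + t))).toNNReal
  have hρ : (ρ : ℝ) = Real.exp (-(a + t)) := Real.coe_toNNReal _ (Real.exp_pos _).le
  have hρ1 : ρ ≤ 1 := by
    rw [← NNReal.coe_le_coe, hρ]
    exact Real.exp_le_one_iff.2 (by linarith)
  refine ⟨M * Real.log (2 * Fintype.card S), fun n =>
    (itineraryEntropy_le_mul_integral_codeCost hinv hσ hU hD (Real.toNNReal_pos.2 (Real.exp_pos _))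
      hρ1 hθ hη hsum hE
      (fun x hx => (hcode x hx).imp fun m h => ⟨h.1, h.2.1.trans M.le_succ, h.2.2⟩) n).trans ?_⟩
  have hrare : μ.real U * -Real.log η + μ.real D * Real.log (2 * Fintype.card S) ≤ t := calc
    _ ≤ μ.real U * |-Real.log η| + μ.real D * |Real.log (2 * Fintype.card S)| := by
      gcongr <;> exact le_abs_self _
    _ ≤ t / (L + 1) * |-Real.log η| + t / (L + 1) * |Real.log (2 * Fintype.card S)| := by gcongr
    _ = t * (L / (L + 1)) := by ring
    _ ≤ t := mul_le_of_le_one_right ht.le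
        (div_le_one_of_le₀ (le_add_of_nonneg_right zero_le_one) (by positivity))
  rw [(integral_codeCost hU hD _ _ _ _).2, hρ, Real.log_exp, neg_neg]
  gcongr _ * ?_ + _
  linarith

lemma ksEntropy_le_essSup_localEntropy (hf : Continuous f) (hinv : MeasurePreserving f μ μ) :
    ksEntropy f μ ≤ essSup (localEntropy f μ) μ := by
  classical
  refine iSup₂_le fun s hs => EReal.le_of_forall_lt_iff_le.1 fun b hb => ?_
  obtain ⟨a, ha, hab⟩ := EReal.lt_iff_exists_real_btwn.1 hb
  obtain ⟨σ, -, hσ, hH⟩ := hs.exists_coding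
  obtain ⟨C, hC⟩ := exists_itineraryEntropy_le hf hinv hσ (ae_lt_of_essSup_lt ha)
    (EReal.coe_lt_coe_iff.1 hab)
  have hlim : Tendsto (fun n : ℕ => b + C / n) atTop (𝓝 b) := by
    simpa using tendsto_const_nhds.add (tendsto_const_div_atTop_nhds_zero_nat C)
  have hle : ∀ᶠ n : ℕ in atTop, dynH f μ s n / n ≤ b + C / n := by
    filter_upwards [eventually_gt_atTop 0] with n hn
    rw [hH, div_le_iff₀ (by positivity), add_mul, div_mul_cancel₀ _ (by positivity), mul_comm b]
    exact hC n
  calc liminf (fun n : ℕ => ((dynH f μ s n / n : ℝ) : EReal)) atTop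
      ≤ liminf (fun n : ℕ => ((b + C / n : ℝ) : EReal)) atTop :=
        liminf_le_liminf (hle.mono fun n h => EReal.coe_le_coe_iff.2 h)
    _ = b := ((continuous_coe_real_ereal.tendsto b).comp hlim).liminf_eq

end LowerBound

end Paper

theorem entropyPressure_eq_essSup_localEntropy_general {X : Type*} [MetricSpace X]
    [MeasurableSpace X] [BorelSpace X] {f : X → X} (hf : Continuous f) (μ : Measure X)
    [IsProbabilityMeasure μ] :
    Pmu f (fun _ => 0) μ = essSup (localEntropy f μ) μ ∧
    (MeasurePreserving f μ μ → ksEntropy f μ ≤ Pmu f (fun _ => 0) μ) ∧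
    (Ergodic f μ →
      (∀ᵐ x ∂μ, localEntropy f μ x = Pmu f (fun _ => 0) μ) ∧
      (TotallyBounded (univ : Set X) → Pmu f (fun _ => 0) μ = ksEntropy f μ)) := by
  rw [Pmu_zero_eq_essSup_localEntropy hf]
  refine ⟨rfl, ksEntropy_le_essSup_localEntropy hf, fun herg => ⟨?_, fun hX => ?_⟩⟩
  · exact ae_eq_essSup_of_comp_le herg (measurable_localEntropy hf μ)
      (localEntropy_map_le hf herg.toMeasurePreserving)
  · exact (essSup_localEntropy_le_ksEntropy hX hf herg).antisymm
      (ksEntropy_le_essSup_localEntropy hf herg.toMeasurePreserving)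

/-- Corollary 4.4: `E_μ(f) = ess sup {h_μ(x)}` (essential supremum w.r.t. `μ`, where
`h_μ(x)` is the Brin–Katok local entropy and `E_μ(f) = P_μ(f,0)`); and if `μ` is
ergodic then `h_μ(x) = E_μ(f) = h_μ(f)` for `μ`-a.e. `x`. -/
theorem entropyPressure_eq_essSup_localEntropy {X : Type*} [MetricSpace X] [CompactSpace X] [MeasurableSpace X] [BorelSpace X]
    (f : X → X) (hf : Continuous f)
    (μ : Measure X) (hp : IsProbabilityMeasure μ) (hinv : MeasurePreserving f μ μ) :
    Pmu f (fun _ => 0) μ = essSup (fun x => localEntropy f μ x) μ ∧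
    (Ergodic f μ →
      Pmu f (fun _ => 0) μ = ksEntropy f μ ∧
      ∀ᵐ x ∂μ, localEntropy f μ x = Pmu f (fun _ => 0) μ) := by
  obtain ⟨hP, -, herg⟩ := entropyPressure_eq_essSup_localEntropy_general hf μ
  exact ⟨hP, fun h => ⟨(herg h).2 isCompact_univ.totallyBounded, (herg h).1⟩⟩
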